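/- Let G be a finite group. Then for every integer g ≥ 1 and every u ∈ G, the number of tuples (x_1,…,x_g,y_1,…,y_g) ∈ G^{2g} satisfying ∏_{i=1}^{g} x_i y_i x_i⁻¹ y_i⁻¹ = u equals |G|^{2g-1} · ∑_{χ ∈ Irr(G)} χ(u⁻¹)/χ(1)^{2g-1}, where Irr(G) denotes the set of irreducible complex characters of G. -/

import Mathlib

/-- `χ : G → ℂ` is the character of some irreducible finite-dimensional complex
representation of `G`. -/
def IsIrrChar (G : Type*) [Group G] (χ : G → ℂ) : Prop :=
  ∃ (V : Type) (_ : AddCommGroup V) (_ : Module ℂ V),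
    FiniteDimensional ℂ V ∧ Nontrivial V ∧
    ∃ ρ : Representation ℂ G V,
      (∀ W : Submodule ℂ V, (∀ g : G, W.map (ρ g) ≤ W) → W = ⊥ ∨ W = ⊤) ∧
      ∀ g, χ g = LinearMap.trace ℂ V (ρ g)


open Representation

lemma aux_sum_ofFn {α R : Type*} [Fintype α] [Semiring R] (f : α → R) (n : ℕ) :
    ∑ p : Fin n → α, (List.ofFn fun i => f (p i)).prod = (∑ a, f a) ^ n := by
  induction n with
  | zero => simp
  | succ n ih =>
    rw [← (Fin.consEquiv (fun _ : Fin (n+1) => α)).sum_comp, Fintype.sum_prod_type, pow_succ', ← ih,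
      Finset.sum_mul]
    refine Finset.sum_congr rfl fun a _ => ?_
    rw [Finset.mul_sum]
    refine Finset.sum_congr rfl fun p _ => ?_
    simp [List.ofFn_succ, Fin.consEquiv]

lemma aux_irr {G V : Type*} [Group G] [AddCommGroup V] [Module ℂ V] [Nontrivial V]
    (ρ : Representation ℂ G V)
    (h : ∀ W : Submodule ℂ V, (∀ g : G, W.map (ρ g) ≤ W) → W = ⊥ ∨ W = ⊤) :
    IsIrreducible ρ := by
  have : Nontrivial (Subrepresentation ρ) := by
    refine ⟨⊥, ⊤, fun e => ?_⟩
    have := congrArg Subrepresentation.toSubmodule e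
    exact (bot_ne_top (α := Submodule ℂ V)) this
  refine ⟨fun W => ?_⟩
  rcases h W.toSubmodule (fun g => by
    rintro _ ⟨v, hv, rfl⟩
    exact W.apply_mem_toSubmodule g hv) with h | h
  · left; exact Subrepresentation.toSubmodule_injective h
  · right; exact Subrepresentation.toSubmodule_injective h

lemma aux_schur {G V : Type*} [Group G] [AddCommGroup V] [Module ℂ V] [FiniteDimensional ℂ V]
    (ρ : Representation ℂ G V) [IsIrreducible ρ] (f : V →ₗ[ℂ] V)
    (hf : ∀ g, f ∘ₗ ρ g = ρ g ∘ₗ f) :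
    ∃ c : ℂ, f = c • (1 : Module.End ℂ V) := by
  let F : IntertwiningMap ρ ρ := ⟨f, hf⟩
  obtain ⟨c, hc⟩ := (IsIrreducible.algebraMap_intertwiningMap_bijective_of_isAlgClosed
    (ρ := ρ) ).2 F
  refine ⟨c, ?_⟩
  have := congrArg IntertwiningMap.toLinearMap hc
  rw [← show F.toLinearMap = f from rfl, ← this]
  rfl

lemma aux_finrank {G V : Type*} [Group G] [AddCommGroup V] [Module ℂ V] [FiniteDimensional ℂ V]
    (ρ : Representation ℂ G V) [IsIrreducible ρ] : (Module.finrank ℂ V : ℂ) ≠ 0 := by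
  intro h
  have h0 : Module.finrank ℂ V = 0 := by exact_mod_cast h
  have := Module.finrank_zero_iff.1 h0
  have hb : (⊥ : Subrepresentation ρ) = ⊤ :=
    Subrepresentation.toSubmodule_injective (Subsingleton.elim _ _)
  exact bot_ne_top hb

lemma aux_schur' {G V : Type*} [Group G] [AddCommGroup V] [Module ℂ V] [FiniteDimensional ℂ V]
    (ρ : Representation ℂ G V) [IsIrreducible ρ] (f : V →ₗ[ℂ] V)
    (hf : ∀ g, f ∘ₗ ρ g = ρ g ∘ₗ f) :
    f = (LinearMap.trace ℂ V f / Module.finrank ℂ V) • (1 : Module.End ℂ V) := by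
  obtain ⟨c, hc⟩ := aux_schur ρ f hf
  have hn := aux_finrank ρ
  conv_lhs => rw [hc]
  conv_rhs => rw [hc]
  congr 1
  simp [hn]

lemma aux_inner {G V : Type*} [Group G] [Fintype G] [AddCommGroup V] [Module ℂ V]
    [FiniteDimensional ℂ V]
    (ρ : Representation ℂ G V) [IsIrreducible ρ] (y : G) :
    ∑ x, ρ (x * y * x⁻¹) =
      (Fintype.card G * ρ.character y / Module.finrank ℂ V) • (1 : Module.End ℂ V) := by
  have := aux_schur' ρ (∑ x, ρ (x * y * x⁻¹)) (fun h => by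
    change (∑ x, ρ (x * y * x⁻¹)) * ρ h = ρ h * (∑ x, ρ (x * y * x⁻¹))
    rw [Finset.sum_mul, Finset.mul_sum]
    refine Fintype.sum_equiv (Equiv.mulLeft h⁻¹) _ _ fun x => ?_
    rw [← map_mul, ← map_mul]
    congr 1
    simp [mul_assoc])
  rw [this]
  congr 2
  rw [map_sum]
  have h2 : ∀ x, LinearMap.trace ℂ V (ρ (x * y * x⁻¹)) = ρ.character y :=
    fun x => ρ.char_conj y x
  simp only [h2]
  simp

lemma aux_comm {G V : Type*} [Group G] [Fintype G] [AddCommGroup V] [Module ℂ V]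
    [FiniteDimensional ℂ V]
    (ρ : Representation ℂ G V) [IsIrreducible ρ] :
    ∑ a : G × G, ρ (a.1 * a.2 * a.1⁻¹ * a.2⁻¹) =
      (((Fintype.card G : ℂ) / Module.finrank ℂ V) ^ 2) • (1 : Module.End ℂ V) := by
  have hn := aux_finrank ρ
  have hG : (Fintype.card G : ℂ) ≠ 0 := by simp
  have e1 : ∑ a : G × G, ρ (a.1 * a.2 * a.1⁻¹ * a.2⁻¹) =
      ∑ y, (Fintype.card G * ρ.character y / Module.finrank ℂ V) • ρ y⁻¹ := by
    rw [Fintype.sum_prod_type_right]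
    refine Finset.sum_congr rfl fun y _ => ?_
    simp only [map_mul ρ _ y⁻¹]
    rw [← Finset.sum_mul, aux_inner]
    simp
  rw [e1]
  refine (aux_schur' ρ _ (fun h => ?_)).trans ?_
  · change (∑ y, _) * ρ h = ρ h * (∑ y, _)
    rw [Finset.sum_mul, Finset.mul_sum, ← (MulAut.conj h).toEquiv.sum_comp]
    refine Finset.sum_congr rfl fun x _ => ?_
    simp only [smul_mul_assoc, mul_smul_comm]
    rw [← map_mul, ← map_mul]
    congr 1
    · simp
    · congr 1; simp [mul_assoc]
  · congr 1
    have : Invertible (Nat.card G : ℂ) := invertibleOfNonzero (by simp)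
    have ho := char_orthonormal ρ ρ
    rw [if_pos ⟨Representation.Equiv.refl _⟩, Nat.card_eq_fintype_card] at ho
    have ho' : ∑ g : G, ρ.character g * ρ.character g⁻¹ = Fintype.card G := by
      field_simp at ho; simpa using ho
    rw [map_sum]
    have h3 : ∀ y, LinearMap.trace ℂ V ((Fintype.card G * ρ.character y / Module.finrank ℂ V) • ρ y⁻¹)
       = (Fintype.card G / Module.finrank ℂ V) * (ρ.character y * ρ.character y⁻¹) := by
      intro y
      rw [map_smul]
      change _ * ρ.character y⁻¹ = _
      ring
    simp only [h3]
    rw [← Finset.mul_sum, ho']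
    ring

lemma aux_tuples {G : Type*} [Group G] [Fintype G] (χ : G → ℂ) (hχ : IsIrrChar G χ) (g : ℕ) (u : G) :
    ∑ p : (Fin g → G) × (Fin g → G),
      χ ((List.ofFn fun i : Fin g => p.1 i * p.2 i * (p.1 i)⁻¹ * (p.2 i)⁻¹).prod * u⁻¹) =
      (Fintype.card G / χ 1) ^ (2 * g) * χ u⁻¹ := by
  obtain ⟨V, _, _, hfd, hnt, ρ, hirr, hc⟩ := hχ
  have := aux_irr ρ hirr
  have h1 : χ 1 = Module.finrank ℂ V := by rw [hc]; simp
  rw [h1]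
  simp only [hc, map_mul ρ _ u⁻¹]
  rw [← map_sum, ← Finset.sum_mul, ← (Equiv.arrowProdEquivProdArrow (Fin g) (fun _ => G) (fun _ => G)).sum_comp]
  have := aux_sum_ofFn (fun a : G × G => ρ (a.1 * a.2 * a.1⁻¹ * a.2⁻¹)) g
  rw [aux_comm] at this
  have e : ∀ p : Fin g → G × G, ρ (List.ofFn fun i => (p i).1 * (p i).2 * (p i).1⁻¹ * (p i).2⁻¹).prod
     = (List.ofFn fun i => ρ ((p i).1 * (p i).2 * (p i).1⁻¹ * (p i).2⁻¹)).prod := by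
    intro p
    rw [map_list_prod, List.map_ofFn]; rfl
  simp only [Equiv.arrowProdEquivProdArrow, Equiv.coe_fn_mk, e]
  rw [this, smul_pow, one_pow, smul_mul_assoc, one_mul, map_smul, pow_mul]
  rfl

lemma aux_char_ne {G : Type*} [Group G] (χ : G → ℂ) (hχ : IsIrrChar G χ) : χ 1 ≠ 0 := by
  obtain ⟨V, _, _, hfd, hnt, ρ, hirr, hc⟩ := hχ
  have := aux_irr ρ hirr
  have h1 : χ 1 = Module.finrank ℂ V := by rw [hc]; simp
  rw [h1]
  exact aux_finrank ρ

lemma aux_orth {G : Type*} [Group G] [Fintype G] (χ ψ : G → ℂ) (hχ : IsIrrChar G χ)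
    (hψ : IsIrrChar G ψ) (h : ∑ g, χ g * ψ g⁻¹ ≠ 0) : χ = ψ := by
  obtain ⟨V, _, _, hfd, hnt, ρ, hirr, hc⟩ := hχ
  obtain ⟨W, _, _, hfd', hnt', σ, hirr', hc'⟩ := hψ
  have := aux_irr ρ hirr
  have := aux_irr σ hirr'
  obtain rfl : χ = ρ.character := funext hc
  obtain rfl : ψ = σ.character := funext hc'
  have : Invertible (Nat.card G : ℂ) := invertibleOfNonzero (by simp)
  have ho := char_orthonormal ρ σ
  by_cases hn : Nonempty (Representation.Equiv σ ρ)
  · exact (char_iso hn.some).symm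
  · rw [if_neg hn] at ho
    exact absurd ho (mul_ne_zero (by simp) h)

lemma aux_trace_matrix {n : ℕ} {d : Fin n → ℕ} (A : Π i, Matrix (Fin (d i)) (Fin (d i)) ℂ) :
    LinearMap.trace ℂ _ (LinearMap.mulLeft ℂ A) = ∑ i, (d i : ℂ) * (A i).trace := by
  classical
  rw [LinearMap.trace_eq_matrix_trace ℂ (Pi.basis fun i => Matrix.stdBasis ℂ (Fin (d i)) (Fin (d i)))]
  rw [Matrix.trace, Fintype.sum_sigma]
  refine Finset.sum_congr rfl fun i _ => ?_
  rw [Fintype.sum_prod_type]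
  have : ∀ x y, (LinearMap.toMatrix (Pi.basis fun i => Matrix.stdBasis ℂ (Fin (d i)) (Fin (d i))) (Pi.basis fun i => Matrix.stdBasis ℂ (Fin (d i)) (Fin (d i)))
     (LinearMap.mulLeft ℂ A)).diag ⟨i, (x, y)⟩ = A i x x := by
    intro x y
    rw [Matrix.diag, LinearMap.toMatrix_apply]
    simp [Matrix.stdBasis, Matrix.mul_apply, Pi.single_apply, ite_apply]
  simp only [this]
  simp [Matrix.trace, Finset.mul_sum]

/-- Regular trace. -/
lemma aux_reg {G : Type*} [Group G] [Fintype G] [DecidableEq G] (x : G) :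
    LinearMap.trace ℂ (MonoidAlgebra ℂ G) (LinearMap.mulLeft ℂ (MonoidAlgebra.of ℂ G x)) =
      if x = 1 then (Fintype.card G : ℂ) else 0 := by
  rw [LinearMap.trace_eq_matrix_trace ℂ (MonoidAlgebra.basis G ℂ)]
  rw [Matrix.trace]
  have : ∀ y, (LinearMap.toMatrix (MonoidAlgebra.basis G ℂ) (MonoidAlgebra.basis G ℂ)
     (LinearMap.mulLeft ℂ (MonoidAlgebra.of ℂ G x))).diag y = if x = 1 then 1 else 0 := by
    intro y
    rw [Matrix.diag, LinearMap.toMatrix_apply]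
    simp [MonoidAlgebra.basis, MonoidAlgebra.single_mul_single, Finsupp.single_apply]
  simp only [this]
  simp

lemma aux_mat_irr {G : Type*} [Group G] {d : ℕ} [NeZero d]
    (φ : MonoidAlgebra ℂ G →ₐ[ℂ] Matrix (Fin d) (Fin d) ℂ) (hφ : Function.Surjective φ) :
    IsIrrChar G (fun x => (φ (MonoidAlgebra.of ℂ G x)).trace) := by
  refine ⟨Fin d → ℂ, inferInstance, inferInstance, inferInstance, inferInstance,
    ((Matrix.toLinAlgEquiv' : Matrix (Fin d) (Fin d) ℂ ≃ₐ[ℂ] _).toAlgHom.comp φ).toMonoidHom.comp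
      (MonoidAlgebra.of ℂ G), ?_, ?_⟩
  · intro W hW
    have key : ∀ a : MonoidAlgebra ℂ G, ∀ w ∈ W, (φ a).mulVec w ∈ W := by
      intro a w hw
      induction a using MonoidAlgebra.induction_on with
      | of g => exact hW g ⟨w, hw, rfl⟩
      | add a b ha hb => rw [map_add, Matrix.add_mulVec]; exact W.add_mem ha hb
      | smul r a ha => rw [map_smul, Matrix.smul_mulVec]; exact W.smul_mem _ ha
    by_cases hb : W = ⊥
    · exact Or.inl hb
    right
    obtain ⟨w, hw, hw0⟩ := (Submodule.ne_bot_iff _).1 hb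
    obtain ⟨k, hk⟩ := Function.ne_iff.1 hw0
    rw [eq_top_iff]
    intro v _
    obtain ⟨a, ha⟩ := hφ (Matrix.of fun i j => if j = k then v i * (w k)⁻¹ else 0)
    have := key a w hw
    rw [ha] at this
    convert this using 1
    ext i
    have hk' : w k ≠ 0 := hk
    simp [Matrix.mulVec, dotProduct, hk']
  · intro g
    exact (Matrix.trace_toLin'_eq _).symm

lemma aux_main (G : Type*) [Group G] [Fintype G] [DecidableEq G] :
    ∃ (n : ℕ) (χ : Fin n → G → ℂ), Function.Injective χ ∧ (∀ i, IsIrrChar G (χ i)) ∧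
      (∀ ψ, IsIrrChar G ψ → ∃ i, χ i = ψ) ∧
      ∀ x, ∑ i, χ i 1 * χ i x = if x = 1 then (Fintype.card G : ℂ) else 0 := by
  have hNZ : NeZero (Nat.card G : ℂ) := ⟨by simp⟩
  obtain ⟨n, d, hd, ⟨e⟩⟩ :=
    IsSemisimpleRing.exists_algEquiv_pi_matrix_of_isAlgClosed ℂ (MonoidAlgebra ℂ G)
  let φ : ∀ i, MonoidAlgebra ℂ G →ₐ[ℂ] Matrix (Fin (d i)) (Fin (d i)) ℂ :=
    fun i => (Pi.evalAlgHom ℂ _ i).comp e.toAlgHom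
  have hφ : ∀ i, Function.Surjective (φ i) := fun i =>
    (Function.surjective_eval i).comp e.surjective
  let χ : Fin n → G → ℂ := fun i x => (φ i (MonoidAlgebra.of ℂ G x)).trace
  have hirr : ∀ i, IsIrrChar G (χ i) := fun i => aux_mat_irr (φ i) (hφ i)
  have hone : ∀ i, χ i 1 = d i := by
    intro i
    change (φ i (MonoidAlgebra.of ℂ G 1)).trace = _
    rw [map_one, map_one]
    simp
  have hreg : ∀ x, ∑ i, χ i 1 * χ i x = if x = 1 then (Fintype.card G : ℂ) else 0 := by
    intro x
    rw [← aux_reg x, ← LinearMap.trace_conj' _ e.toLinearEquiv]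
    have : e.toLinearEquiv.conj (LinearMap.mulLeft ℂ (MonoidAlgebra.of ℂ G x)) =
        LinearMap.mulLeft ℂ (e (MonoidAlgebra.of ℂ G x)) := by
      apply LinearMap.ext
      intro v
      simp [LinearEquiv.conj_apply]
    rw [this, aux_trace_matrix]
    simp only [hone]
    rfl
  refine ⟨n, χ, ?_, hirr, ?_, hreg⟩
  · intro i j hij
    by_contra hne
    have key : ∀ a : MonoidAlgebra ℂ G, (φ i a).trace = (φ j a).trace := by
      intro a
      induction a using MonoidAlgebra.induction_on with
      | of g => exact congrFun hij g
      | add a b ha hb => simp only [map_add, Matrix.trace_add, ha, hb]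
      | smul r a ha => simp only [map_smul, Matrix.trace_smul, ha]
    have h := key (e.symm (Pi.single i 1))
    have h1 : φ i (e.symm (Pi.single i 1)) = 1 := by simp [φ]
    have h2 : φ j (e.symm (Pi.single i 1)) = 0 := by
      simp [φ, Pi.single_eq_of_ne (Ne.symm hne)]
    rw [h1, h2] at h
    have := (hd i).ne
    simp at h
    exact this h
  · intro ψ hψ
    by_contra! hno
    have h0 : ∀ i, ∑ g, χ i g * ψ g⁻¹ = 0 := by
      intro i
      by_contra h
      exact hno i (aux_orth _ _ (hirr i) hψ h)
    have h1 : ∑ g, (∑ i, χ i 1 * χ i g) * ψ g⁻¹ = 0 := by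
      simp only [Finset.sum_mul]
      rw [Finset.sum_comm]
      refine Finset.sum_eq_zero fun i _ => ?_
      simp only [mul_assoc]
      rw [← Finset.mul_sum, h0, mul_zero]
    simp only [hreg] at h1
    have := aux_char_ne ψ hψ
    simp [this] at h1

/-- Frobenius-type counting formula: the number of `2g`-tuples with
`∏ᵢ xᵢ yᵢ xᵢ⁻¹ yᵢ⁻¹ = u` equals `|G|^{2g-1} ∑_{χ ∈ Irr G} χ(u⁻¹)/χ(1)^{2g-1}`.
This is the finite-group analogue of the total mass of the conditioned Haar
measure `μ_H` on the moduli space of flat connections of topological type `u`. -/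
theorem finite_commutator_product_count
    {G : Type*} [Group G] [Fintype G]
    (g : ℕ) (hg : 1 ≤ g) (u : G) :
    (Nat.card {p : (Fin g → G) × (Fin g → G) //
        (List.ofFn fun i : Fin g => p.1 i * p.2 i * (p.1 i)⁻¹ * (p.2 i)⁻¹).prod = u} : ℂ) =
      (Fintype.card G : ℂ) ^ (2 * g - 1) *
        ∑ᶠ χ ∈ {χ : G → ℂ | IsIrrChar G χ}, χ u⁻¹ / χ 1 ^ (2 * g - 1) := by
  classical
  obtain ⟨n, χ, hinj, hirr, hall, hreg⟩ := aux_main G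
  have hset : {χ : G → ℂ | IsIrrChar G χ} = Set.range χ := by
    ext ψ
    exact ⟨fun h => hall ψ h, by rintro ⟨i, rfl⟩; exact hirr i⟩
  rw [hset, finsum_mem_range hinj, finsum_eq_sum_of_fintype]
  have hG : (Fintype.card G : ℂ) ≠ 0 := by simp
  have hN : (Nat.card {p : (Fin g → G) × (Fin g → G) //
        (List.ofFn fun i : Fin g => p.1 i * p.2 i * (p.1 i)⁻¹ * (p.2 i)⁻¹).prod = u} : ℂ) *
        Fintype.card G = ∑ p : (Fin g → G) × (Fin g → G), ∑ i, χ i 1 *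
      χ i ((List.ofFn fun i : Fin g => p.1 i * p.2 i * (p.1 i)⁻¹ * (p.2 i)⁻¹).prod * u⁻¹) := by
    simp only [hreg, mul_inv_eq_one]
    rw [Nat.card_eq_fintype_card, Fintype.card_subtype, ← Finset.sum_filter, Finset.sum_const,
      nsmul_eq_mul]
  rw [Finset.sum_comm] at hN
  simp only [← Finset.mul_sum, aux_tuples _ (hirr _)] at hN
  apply mul_right_cancel₀ hG
  rw [hN, Finset.mul_sum, Finset.sum_mul]
  refine Finset.sum_congr rfl fun i _ => ?_
  have hi := aux_char_ne _ (hirr i)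
  obtain ⟨m, hm⟩ : ∃ m, 2 * g = m + 1 := ⟨2 * g - 1, by omega⟩
  rw [hm, Nat.add_sub_cancel, div_pow]
  field_simp
  ring
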